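/- arXiv:1211.5789 — 4 statements merged into one kernel-verified Lean document; each statement's English description precedes it below -/
import Mathlib

section
/- The idempotent e' = 1 − aʳ*a is a full idempotent of A: the two-sided ideal generated by e' is all of A, i.e., A*e'*A = A (equivalently, 1 belongs to the two-sided ideal generated by e'). -/
/-!
The terms `bⁱ * (1 - b * a) * aⁱ` telescope to `1 - bⁿ * aⁿ`, so `1 - b * a` generates the unit
ideal as soon as `bⁿ * aⁿ = 0`. An arrow between orthogonal idempotents squares to zero, so two
terms suffice there: `1 = e' + aʳ * e' * a` for `e' = 1 - aʳ * a`.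
-/

theorem mul_self_eq_zero_of_eq_mul_mul {S : Type*} [SemigroupWithZero S] {p q a : S}
    (hpq : p * q = 0) (ha : a = q * a * p) : a * a = 0 :=
  calc
    a * a = (q * a * p) * (q * a * p) := by rw [← ha]
    _ = q * a * (p * q) * (a * p) := by simp only [mul_assoc]
    _ = 0 := by rw [hpq, mul_zero, zero_mul]

theorem sum_range_pow_mul_one_sub_mul_mul_pow {R : Type*} [Ring R] (a b : R) (n : ℕ) :
    ∑ i ∈ Finset.range n, b ^ i * (1 - b * a) * a ^ i = 1 - b ^ n * a ^ n := by
  have term_eq_sub (i : ℕ) :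
      b ^ i * (1 - b * a) * a ^ i = b ^ i * a ^ i - b ^ (i + 1) * a ^ (i + 1) := by
    rw [pow_succ b, pow_succ' a]
    simp only [mul_sub, sub_mul, mul_one, mul_assoc]
  simp only [term_eq_sub, Finset.sum_range_sub' fun i => b ^ i * a ^ i, pow_zero, mul_one]

theorem sum_mul_mul_mem_twoSidedIdeal {R ι : Type*} [NonUnitalNonAssocRing R]
    (I : TwoSidedIdeal R) {x : R} (hx : x ∈ I) (s : Finset ι) (y z : ι → R) :
    ∑ i ∈ s, y i * x * z i ∈ I :=
  sum_mem fun i _ => I.mul_mem_right _ (z i) (I.mul_mem_left (y i) x hx)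

theorem one_sub_section_mul_is_full_idempotent_general {R : Type*} [Ring R] {a b : R} {n : ℕ}
    (h : b ^ n * a ^ n = 0) :
    (1 : R) ∈ TwoSidedIdeal.span {1 - b * a} ∧
    ∃ (m : ℕ) (y z : Fin m → R), ∑ i, y i * (1 - b * a) * z i = 1 := by
  have sum_eq_one : ∑ i : Fin n, b ^ (i : ℕ) * (1 - b * a) * a ^ (i : ℕ) = 1 := by
    rw [Fin.sum_univ_eq_sum_range fun i => b ^ i * (1 - b * a) * a ^ i,
      sum_range_pow_mul_one_sub_mul_mul_pow, h, sub_zero]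
  have sum_mem_span := sum_mul_mul_mem_twoSidedIdeal (TwoSidedIdeal.span {1 - b * a})
    (TwoSidedIdeal.subset_span (Set.mem_singleton _)) Finset.univ
    (fun i : Fin n => b ^ (i : ℕ)) (fun i => a ^ (i : ℕ))
  rw [sum_eq_one] at sum_mem_span
  exact ⟨sum_mem_span, n, fun i => b ^ (i : ℕ), fun i => a ^ (i : ℕ), sum_eq_one⟩

/-- The idempotent `e' = 1 - aʳ*a` is a full idempotent of `A`: the two-sided ideal it
generates is all of `A`, i.e. `A*e'*A = A`; equivalently `1` belongs to the two-sided
ideal generated by `e'`, i.e. `1` is a finite sum of elements `y*e'*z`. -/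
theorem one_sub_section_mul_is_full_idempotent (A : Type*) [Ring A] (e₀ e₁ a ar : A)
    (he₀ : IsIdempotentElem e₀) (he₁ : IsIdempotentElem e₁)
    (h₀₁ : e₀ * e₁ = 0) (h₁₀ : e₁ * e₀ = 0)
    (ha : a = e₁ * a * e₀) (har : ar = e₀ * ar * e₁) (haar : a * ar = e₁) :
    (1 : A) ∈ TwoSidedIdeal.span {1 - ar * a} ∧
    ∃ (n : ℕ) (y z : Fin n → A), ∑ i, y i * (1 - ar * a) * z i = 1 := by
  have ha_sq : a ^ 2 = 0 := by rw [sq, mul_self_eq_zero_of_eq_mul_mul h₀₁ ha]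
  exact one_sub_section_mul_is_full_idempotent_general (n := 2) (by rw [ha_sq, mul_zero])
end

section
/- For every left A-module M: (1) e'M = {e'*m : m ∈ M} equals the kernel of left multiplication by a on M, i.e., e'M = {m ∈ M | a·m = 0}; and (2) the map m ↦ e'·m induces a well-defined isomorphism of abelian groups from the quotient M/(aʳ·M) onto {m ∈ M | a·m = 0}, where aʳ·M = {aʳ·m : m ∈ M}. -/
/-- The additive subgroup `c•M = {c • m : m ∈ M}` of a module `M`. -/
def smulRange {A : Type*} [Ring A] (c : A) (M : Type*) [AddCommGroup M] [Module A M] :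
    AddSubgroup M where
  carrier := Set.range fun m : M => c • m
  add_mem' := by
    rintro _ _ ⟨x, rfl⟩ ⟨y, rfl⟩
    exact ⟨x + y, by simp [smul_add]⟩
  zero_mem' := ⟨0, smul_zero c⟩
  neg_mem' := by
    rintro _ ⟨x, rfl⟩
    exact ⟨-x, by simp⟩

/-- The additive subgroup `{m ∈ M | c • m = 0}`, the kernel of left multiplication
by `c` on `M`. -/
def smulKer {A : Type*} [Ring A] (c : A) (M : Type*) [AddCommGroup M] [Module A M] :
    AddSubgroup M where
  carrier := {m : M | c • m = 0}
  add_mem' := by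
    intro x y hx hy
    simp only [Set.mem_setOf_eq] at *
    rw [smul_add, hx, hy, add_zero]
  zero_mem' := by simp
  neg_mem' := by
    intro x hx
    simp only [Set.mem_setOf_eq] at *
    rw [smul_neg, hx, neg_zero]

/-! If `f g f = f` and `g f g = g`, then `1 - g f` has range `ker f` and kernel `range g`, so the
first isomorphism theorem for it reads `M / range g ≃ ker f`. Left multiplications by `a` and `aʳ`
form such a pair, since `a aʳ = e₁`, `e₁ a = a` and `aʳ e₁ = aʳ`. -/

section GeneralizedInverse

variable {M N : Type*} [AddCommGroup M] [AddGroup N] {f : M →+ N} {g : N →+ M}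

theorem range_id_sub_comp_eq_ker (hfgf : ∀ x, f (g (f x)) = f x) :
    (AddMonoidHom.id M - g.comp f).range = f.ker := by
  ext m
  constructor
  · rintro ⟨x, rfl⟩
    simp [AddMonoidHom.mem_ker, hfgf]
  · intro hm
    exact ⟨m, by simp [AddMonoidHom.mem_ker.mp hm]⟩

theorem ker_id_sub_comp_eq_range (hgfg : ∀ y, g (f (g y)) = g y) :
    (AddMonoidHom.id M - g.comp f).ker = g.range := by
  ext m
  constructor
  · intro hm
    exact ⟨f m, (sub_eq_zero.mp hm).symm⟩
  · rintro ⟨y, rfl⟩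
    simp [AddMonoidHom.mem_ker, hgfg]

/-- The isomorphism `M / range g ≃ ker f` induced by `1 - g f`, identifying the cokernel of `g`
with the kernel of `f` when `f` and `g` are generalized inverses of each other. -/
noncomputable def quotientRangeEquivKer (hfgf : ∀ x, f (g (f x)) = f x)
    (hgfg : ∀ y, g (f (g y)) = g y) : M ⧸ g.range ≃+ f.ker :=
  (QuotientAddGroup.quotientAddEquivOfEq (ker_id_sub_comp_eq_range hgfg).symm).trans <|
    (QuotientAddGroup.quotientKerEquivRange (AddMonoidHom.id M - g.comp f)).trans <|
      AddEquiv.addSubgroupCongr (range_id_sub_comp_eq_ker hfgf)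

theorem coe_quotientRangeEquivKer_mk (hfgf : ∀ x, f (g (f x)) = f x)
    (hgfg : ∀ y, g (f (g y)) = g y) (m : M) :
    (quotientRangeEquivKer hfgf hgfg (QuotientAddGroup.mk m) : M) = m - g (f m) :=
  rfl

end GeneralizedInverse

section Semigroup

variable {S : Type*} [Semigroup S] {e f x : S}

theorem mul_eq_self_of_eq_mul_mul (he : IsIdempotentElem e) (hx : x = e * x * f) : e * x = x := by
  rw [hx, ← mul_assoc, ← mul_assoc, he.eq]

theorem self_mul_eq_of_eq_mul_mul (hf : IsIdempotentElem f) (hx : x = e * x * f) : x * f = x := by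
  rw [hx, mul_assoc, hf.eq]

theorem smul_smul_smul_of_mul_mul_eq {X : Type*} [SemigroupAction S X] {a b : S}
    (h : a * b * a = a) (m : X) : a • b • a • m = a • m := by
  rw [← mul_smul, ← mul_smul, h]

end Semigroup

section Module

variable {A : Type*} [Ring A] {a b : A} (M : Type*) [AddCommGroup M] [Module A M]

theorem one_sub_mul_smul (a b : A) (m : M) : (1 - b * a) • m = m - b • a • m := by
  rw [sub_smul, one_smul, mul_smul]

theorem smulRange_eq_range (c : A) :
    smulRange c M = (DistribSMul.toAddMonoidHom M c).range :=
  rfl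

theorem smulKer_eq_ker (c : A) : smulKer c M = (DistribSMul.toAddMonoidHom M c).ker :=
  rfl

theorem smulRange_one_sub_mul_eq_smulKer (haba : a * b * a = a) :
    smulRange (1 - b * a) M = smulKer a M := by
  have hsub : DistribSMul.toAddMonoidHom M (1 - b * a) = AddMonoidHom.id M -
      (DistribSMul.toAddMonoidHom M b).comp (DistribSMul.toAddMonoidHom M a) :=
    AddMonoidHom.ext (one_sub_mul_smul M a b)
  rw [smulRange_eq_range, hsub, smulKer_eq_ker]
  exact range_id_sub_comp_eq_ker (smul_smul_smul_of_mul_mul_eq (X := M) haba)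

theorem breaking_kernel_cokernel_general (haba : a * b * a = a) (hbab : b * a * b = b) :
    (Set.range (fun m : M => (1 - b * a) • m) = {m : M | a • m = 0}) ∧
    ∃ φ : (M ⧸ smulRange b M) ≃+ smulKer a M,
      ∀ m : M, (φ (QuotientAddGroup.mk m) : M) = (1 - b * a) • m := by
  refine ⟨congrArg SetLike.coe (smulRange_one_sub_mul_eq_smulKer M haba), ?_⟩
  simp only [one_sub_mul_smul]
  rw [smulRange_eq_range, smulKer_eq_ker]
  have hfgf := smul_smul_smul_of_mul_mul_eq (X := M) haba
  have hgfg := smul_smul_smul_of_mul_mul_eq (X := M) hbab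
  exact ⟨quotientRangeEquivKer hfgf hgfg, coe_quotientRangeEquivKer_mk hfgf hgfg⟩

end Module

/-- With `e' = 1 - aʳ*a`: for every left `A`-module `M`, (1) the set
`e'M = {e' • m}` equals the kernel `{m | a • m = 0}` of left multiplication by `a`; and
(2) the map `m ↦ e' • m` induces an isomorphism of abelian groups
`M/(aʳ•M) ≅ {m | a • m = 0}`. -/
theorem breaking_kernel_cokernel (A : Type*) [Ring A] (e₀ e₁ a ar : A)
    (he₀ : IsIdempotentElem e₀) (he₁ : IsIdempotentElem e₁)
    (h₀₁ : e₀ * e₁ = 0) (h₁₀ : e₁ * e₀ = 0)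
    (ha : a = e₁ * a * e₀) (har : ar = e₀ * ar * e₁) (haar : a * ar = e₁)
    (M : Type*) [AddCommGroup M] [Module A M] :
    (Set.range (fun m : M => (1 - ar * a) • m) = {m : M | a • m = 0}) ∧
    ∃ φ : (M ⧸ smulRange ar M) ≃+ smulKer a M,
      ∀ m : M, (φ (QuotientAddGroup.mk m) : M) = (1 - ar * a) • m := by
  have haba : a * ar * a = a := by rw [haar, mul_eq_self_of_eq_mul_mul he₁ ha]
  have hbab : ar * a * ar = ar := by rw [mul_assoc, haar, self_mul_eq_of_eq_mul_mul he₁ har]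
  exact breaking_kernel_cokernel_general M haba hbab
end

section
/- Let k be a commutative ring, let A and B be associative k-algebras, and let P be a finitely generated projective left A-module. Then there is an isomorphism of k-algebras End_{B⊗ₖA}(B ⊗ₖ P) ≅ Bᵒᵖ ⊗ₖ End_A(P), where B ⊗ₖ P is a left B⊗ₖA-module via (b⊗x)·(b'⊗p) = (b·b') ⊗ (x·p); explicitly, an endomorphism φ corresponds to Σⱼ bⱼᵒᵖ ⊗ fⱼ precisely when φ(1⊗p) = Σⱼ bⱼ ⊗ fⱼ(p) for all p ∈ P. -/
open scoped TensorProduct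

/-! Finite dual bases `(mᵢ, cᵢ)` of `M` over `B` and `(pⱼ, dⱼ)` of `P` over `A` make the canonical
map `Hom_B(M, M') ⊗ Hom_A(P, P') → Hom_{B ⊗ A}(M ⊗ P, M' ⊗ P')` invertible: a homomorphism `ψ` is
determined by its values `ψ (mᵢ ⊗ pⱼ)`, and its inverse image is the sum over `i, j` of the images
of these values under `m' ⊗ p' ↦ cᵢ(-) m' ⊗ dⱼ(-) p'`. The theorem is the case `M = M' = B`,
`P = P'`, where `End_B(B) ≅ Bᵒᵖ`. -/

/-- A finite dual basis of an `R`-module `M`: vectors `vec i` and functionals `coord i` with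
`m = ∑ i, coord i m • vec i` for all `m`. The vectors need not be linearly independent; such data
exist precisely when `M` is finitely generated and projective. -/
structure FiniteDualBasis (R ι M : Type*) [Semiring R] [Fintype ι] [AddCommMonoid M]
    [Module R M] where
  vec : ι → M
  coord : ι → M →ₗ[R] R
  sum_coord_smul_vec (m : M) : ∑ i, coord i m • vec i = m

namespace FiniteDualBasis

variable {R ι M N : Type*} [Semiring R] [AddCommMonoid M] [Module R M] [AddCommMonoid N]
  [Module R N]

variable (R M) in
theorem exists_of_projective [Module.Finite R M] [Module.Projective R M] :
    ∃ n : ℕ, Nonempty (FiniteDualBasis R (Fin n) M) := by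
  obtain ⟨n, f, g, -, -, hfg⟩ := Module.Finite.exists_comp_eq_id_of_projective R M
  refine ⟨n, ⟨⟨fun i => f (Pi.single i 1), fun i => LinearMap.proj i ∘ₗ g, fun m => ?_⟩⟩⟩
  calc ∑ i, g m i • f (Pi.single i 1)
    _ = f (∑ i, g m i • Pi.single i 1) := by simp only [map_sum, map_smul]
    _ = f (g m) := by rw [← pi_eq_sum_univ' (g m)]
    _ = m := LinearMap.congr_fun hfg m

theorem sum_smulRight_map_vec [Fintype ι] (b : FiniteDualBasis R ι M) (f : M →ₗ[R] N) :
    ∑ i, (b.coord i).smulRight (f (b.vec i)) = f := by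
  ext m
  simp only [LinearMap.sum_apply, LinearMap.smulRight_apply, ← map_smul, ← map_sum,
    b.sum_coord_smul_vec]

end FiniteDualBasis

section

variable (k : Type*) {R M N : Type*} [CommSemiring k] [Semiring R] [AddCommMonoid M] [Module R M]
  [AddCommMonoid N] [Module R N] [Module k N] [SMulCommClass R k N]

/-- The map `n ↦ (m ↦ c m • n)` attached to a functional `c`, as a `k`-linear map in `n`. It differs
from `LinearMap.smulRightₗ` in that `R` need not be commutative. -/
def smulRightHom (c : M →ₗ[R] R) : N →ₗ[k] M →ₗ[R] N :=
  LinearMap.lcomp k N c ∘ₗ (LinearMap.ringLmapEquivSelf R k N).symm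

theorem smulRightHom_apply (c : M →ₗ[R] R) (n : N) : smulRightHom k c n = c.smulRight n := by
  ext m
  simp [smulRightHom]

end

/-- The given `B ⊗[k] A`-module structure on `M ⊗[k] P` is the factorwise one. This is a predicate
on an arbitrary structure because Mathlib has no instance for the factorwise action. -/
class IsTensorAction (k B A M P : Type*) [CommSemiring k] [Semiring B] [Algebra k B]
    [Semiring A] [Algebra k A] [AddCommMonoid M] [Module k M] [Module B M]
    [AddCommMonoid P] [Module k P] [Module A P] [Module (B ⊗[k] A) (M ⊗[k] P)] : Prop where
  tmul_smul_tmul (b : B) (a : A) (m : M) (p : P) :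
    (b ⊗ₜ[k] a : B ⊗[k] A) • (m ⊗ₜ[k] p : M ⊗[k] P) = (b • m) ⊗ₜ[k] (a • p)

namespace IsTensorAction

theorem hom_ext {k B A M P N : Type*} [CommSemiring k] [Semiring B] [Algebra k B] [Semiring A]
    [Algebra k A] [AddCommMonoid M] [Module k M] [AddCommMonoid P] [Module k P]
    [Module (B ⊗[k] A) (M ⊗[k] P)] [AddCommMonoid N] [Module (B ⊗[k] A) N]
    {ψ φ : M ⊗[k] P →ₗ[B ⊗[k] A] N} (h : ∀ m p, ψ (m ⊗ₜ p) = φ (m ⊗ₜ p)) : ψ = φ := by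
  ext t
  induction t with
  | zero => simp only [map_zero]
  | add t t' ht ht' => simp only [map_add, ht, ht']
  | tmul m p => exact h m p

theorem hom_tmul_eq_smul_one_tmul {k B A P N : Type*} [CommSemiring k] [Semiring B] [Algebra k B]
    [Semiring A] [Algebra k A] [AddCommMonoid P] [Module k P] [Module A P]
    [Module (B ⊗[k] A) (B ⊗[k] P)] [IsTensorAction k B A B P]
    [AddCommMonoid N] [Module (B ⊗[k] A) N] (ψ : B ⊗[k] P →ₗ[B ⊗[k] A] N) (b : B) (p : P) :
    ψ (b ⊗ₜ p) = (b ⊗ₜ[k] (1 : A) : B ⊗[k] A) • ψ (1 ⊗ₜ p) := by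
  rw [← map_smul, tmul_smul_tmul, smul_eq_mul, mul_one, one_smul]

variable {k B A M M' P P' : Type*} [CommSemiring k] [Semiring B] [Algebra k B]
  [Semiring A] [Algebra k A]
  [AddCommMonoid M] [Module k M] [Module B M]
  [AddCommMonoid P] [Module k P] [Module A P] [Module (B ⊗[k] A) (M ⊗[k] P)]
  [AddCommMonoid M'] [Module k M'] [Module B M']
  [AddCommMonoid P'] [Module k P'] [Module A P'] [Module (B ⊗[k] A) (M' ⊗[k] P')]

instance isScalarTower [IsScalarTower k B M] [IsTensorAction k B A M P] :
    IsScalarTower k (B ⊗[k] A) (M ⊗[k] P) where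
  smul_assoc r s t := by
    induction s with
    | zero => simp only [smul_zero, zero_smul]
    | add s s' hs hs' => simp only [smul_add, add_smul, hs, hs']
    | tmul b a =>
      induction t with
      | zero => simp only [smul_zero]
      | add t t' ht ht' => simp only [smul_add, ht, ht']
      | tmul m p => simp only [TensorProduct.smul_tmul', tmul_smul_tmul, smul_assoc]

variable [IsScalarTower k B M] [IsScalarTower k A P] [IsTensorAction k B A M P]
  [IsScalarTower k B M'] [IsScalarTower k A P'] [IsTensorAction k B A M' P']

/-- `f ⊗ g` as a `B ⊗[k] A`-linear map, for a `B`-linear `f` and an `A`-linear `g`. -/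
def map (f : M →ₗ[B] M') (g : P →ₗ[A] P') : M ⊗[k] P →ₗ[B ⊗[k] A] M' ⊗[k] P' where
  __ := TensorProduct.map (f.restrictScalars k) (g.restrictScalars k)
  map_smul' s t := by
    dsimp
    induction s with
    | zero => simp only [zero_smul, map_zero]
    | add s s' hs hs' => simp only [add_smul, map_add, hs, hs']
    | tmul b a =>
      induction t with
      | zero => simp only [smul_zero, map_zero]
      | add t t' ht ht' => simp only [smul_add, map_add, ht, ht']
      | tmul m p =>
        simp only [tmul_smul_tmul, TensorProduct.map_tmul, LinearMap.restrictScalars_apply,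
          map_smul]

@[simp]
theorem map_tmul (f : M →ₗ[B] M') (g : P →ₗ[A] P') (m : M) (p : P) :
    map (k := k) f g (m ⊗ₜ p) = f m ⊗ₜ g p :=
  rfl

/-- The canonical map `Hom_B(M, M') ⊗ Hom_A(P, P') → Hom_{B ⊗ A}(M ⊗ P, M' ⊗ P')`. -/
def homMap :
    (M →ₗ[B] M') ⊗[k] (P →ₗ[A] P') →ₗ[k] M ⊗[k] P →ₗ[B ⊗[k] A] M' ⊗[k] P' :=
  TensorProduct.lift <| LinearMap.mk₂ k map
    (fun _ _ _ => hom_ext fun _ _ => TensorProduct.add_tmul _ _ _)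
    (fun _ _ _ => hom_ext fun _ _ => TensorProduct.smul_tmul' _ _ _)
    (fun _ _ _ => hom_ext fun _ _ => TensorProduct.tmul_add _ _ _)
    (fun _ _ _ => hom_ext fun _ _ => TensorProduct.tmul_smul _ _ _)

@[simp]
theorem homMap_tmul (f : M →ₗ[B] M') (g : P →ₗ[A] P') :
    homMap (k := k) (f ⊗ₜ g) = map f g :=
  rfl

theorem homMap_map_smulRightHom (c : M →ₗ[B] B) (d : P →ₗ[A] A) (t : M' ⊗[k] P')
    (m : M) (p : P) :
    homMap (TensorProduct.map (smulRightHom k c) (smulRightHom k d) t) (m ⊗ₜ p) =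
      (c m ⊗ₜ[k] d p : B ⊗[k] A) • t := by
  induction t with
  | zero => simp only [map_zero, LinearMap.zero_apply, smul_zero]
  | add t t' ht ht' => simp only [map_add, LinearMap.add_apply, smul_add, ht, ht']
  | tmul m' p' =>
    simp only [TensorProduct.map_tmul, smulRightHom_apply, homMap_tmul, map_tmul,
      LinearMap.smulRight_apply, tmul_smul_tmul]

variable {ι κ : Type*} [Fintype ι] [Fintype κ] (b : FiniteDualBasis B ι M)
  (d : FiniteDualBasis A κ P)

/-- The inverse of `homMap` given by finite dual bases of `M` and `P`: it sends `ψ` to the sum over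
`i, j` of the tensors `∑ (cᵢ(-) m') ⊗ (dⱼ(-) p')`, where `ψ (mᵢ ⊗ pⱼ) = ∑ m' ⊗ p'`. -/
def homInv (ψ : M ⊗[k] P →ₗ[B ⊗[k] A] M' ⊗[k] P') : (M →ₗ[B] M') ⊗[k] (P →ₗ[A] P') :=
  ∑ i, ∑ j, TensorProduct.map (smulRightHom k (b.coord i)) (smulRightHom k (d.coord j))
    (ψ (b.vec i ⊗ₜ d.vec j))

theorem homInv_homMap (x : (M →ₗ[B] M') ⊗[k] (P →ₗ[A] P')) : homInv b d (homMap x) = x := by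
  unfold homInv
  induction x with
  | zero => simp only [map_zero, LinearMap.zero_apply, Finset.sum_const_zero]
  | add x y hx hy => simp only [map_add, LinearMap.add_apply, Finset.sum_add_distrib, hx, hy]
  | tmul f g =>
    simp only [homMap_tmul, map_tmul, TensorProduct.map_tmul, smulRightHom_apply,
      ← TensorProduct.tmul_sum, ← TensorProduct.sum_tmul, FiniteDualBasis.sum_smulRight_map_vec]

theorem homMap_homInv (ψ : M ⊗[k] P →ₗ[B ⊗[k] A] M' ⊗[k] P') : homMap (homInv b d ψ) = ψ := by
  refine hom_ext fun m p => ?_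
  calc homMap (homInv b d ψ) (m ⊗ₜ p)
    _ = ∑ i, ∑ j, (b.coord i m ⊗ₜ[k] d.coord j p : B ⊗[k] A) • ψ (b.vec i ⊗ₜ d.vec j) := by
      simp only [homInv, map_sum, LinearMap.sum_apply, homMap_map_smulRightHom]
    _ = ∑ i, ∑ j, ψ ((b.coord i m • b.vec i) ⊗ₜ (d.coord j p • d.vec j)) := by
      simp only [← map_smul, tmul_smul_tmul]
    _ = ψ (m ⊗ₜ p) := by
      simp only [← map_sum, ← TensorProduct.tmul_sum, ← TensorProduct.sum_tmul,
        FiniteDualBasis.sum_coord_smul_vec]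

/-- `homMap` as an equivalence, for modules `M` and `P` with finite dual bases. -/
def homEquiv :
    (M →ₗ[B] M') ⊗[k] (P →ₗ[A] P') ≃ₗ[k] M ⊗[k] P →ₗ[B ⊗[k] A] M' ⊗[k] P' where
  __ := homMap
  invFun := homInv b d
  left_inv := homInv_homMap b d
  right_inv := homMap_homInv b d

/-- The algebra isomorphism `End_B(M) ⊗ End_A(P) ≅ End_{B ⊗ A}(M ⊗ P)` for modules `M` and `P` with
finite dual bases. -/
def endEquiv :
    Module.End B M ⊗[k] Module.End A P ≃ₐ[k] Module.End (B ⊗[k] A) (M ⊗[k] P) :=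
  Algebra.TensorProduct.algEquivOfLinearEquivTensorProduct (homEquiv b d)
    (fun _ _ _ _ => hom_ext fun _ _ => rfl) (hom_ext fun _ _ => rfl)

theorem endEquiv_tmul (f : Module.End B M) (g : Module.End A P) :
    endEquiv (k := k) b d (f ⊗ₜ g) = map f g :=
  rfl

end IsTensorAction

theorem end_tensor_projective_general (k A B M P : Type*) [CommSemiring k]
    [Semiring A] [Semiring B] [Algebra k A] [Algebra k B]
    [AddCommMonoid M] [Module B M] [Module k M] [IsScalarTower k B M]
    [AddCommMonoid P] [Module A P] [Module k P] [IsScalarTower k A P]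
    [Module.Finite B M] [Module.Projective B M] [Module.Finite A P] [Module.Projective A P]
    [Module (B ⊗[k] A) (M ⊗[k] P)] [IsTensorAction k B A M P] :
    ∃ φ : Module.End (B ⊗[k] A) (M ⊗[k] P) ≃ₐ[k] (Module.End B M ⊗[k] Module.End A P),
      ∀ (ψ : Module.End (B ⊗[k] A) (M ⊗[k] P)) (n : ℕ) (f : Fin n → Module.End B M)
        (g : Fin n → Module.End A P),
        φ ψ = ∑ j, f j ⊗ₜ[k] g j ↔ ∀ m p, ψ (m ⊗ₜ[k] p) = ∑ j, f j m ⊗ₜ[k] g j p := by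
  obtain ⟨_, ⟨b⟩⟩ := FiniteDualBasis.exists_of_projective B M
  obtain ⟨_, ⟨d⟩⟩ := FiniteDualBasis.exists_of_projective A P
  refine ⟨(IsTensorAction.endEquiv b d).symm, fun ψ n f g => ?_⟩
  have hsum (m : M) (p : P) :
      IsTensorAction.endEquiv b d (∑ j, f j ⊗ₜ[k] g j) (m ⊗ₜ p) = ∑ j, f j m ⊗ₜ[k] g j p := by
    simp only [map_sum, IsTensorAction.endEquiv_tmul, LinearMap.sum_apply, IsTensorAction.map_tmul]
  rw [AlgEquiv.symm_apply_eq]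
  exact ⟨fun h m p => by rw [h, hsum], fun h => IsTensorAction.hom_ext fun m p => by rw [h, hsum]⟩

/-- For a commutative ring `k`, `k`-algebras `A` and `B`, and a finitely generated
projective left `A`-module `P`, there is a `k`-algebra isomorphism
`End_{B⊗ₖA}(B ⊗ₖ P) ≅ Bᵒᵖ ⊗ₖ End_A(P)`, where `B ⊗ₖ P` is a `B⊗ₖA`-module via
`(b ⊗ x) • (b' ⊗ p) = (b*b') ⊗ (x • p)`; explicitly, `φ ψ = Σⱼ bⱼᵒᵖ ⊗ fⱼ` precisely when
`ψ (1 ⊗ p) = Σⱼ bⱼ ⊗ fⱼ p` for all `p ∈ P`. -/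
theorem end_tensor_projective (k A B P : Type*) [CommRing k] [Ring A] [Ring B]
    [Algebra k A] [Algebra k B]
    [AddCommGroup P] [Module A P] [Module k P] [IsScalarTower k A P] [SMulCommClass A k P]
    [Module.Finite A P] [Module.Projective A P]
    [Module (B ⊗[k] A) (B ⊗[k] P)]
    [SMulCommClass (B ⊗[k] A) k (B ⊗[k] P)]
    [IsScalarTower k (B ⊗[k] A) (B ⊗[k] P)]
    (hact : ∀ (b : B) (x : A) (b' : B) (p : P),
      (b ⊗ₜ[k] x : B ⊗[k] A) • (b' ⊗ₜ[k] p : B ⊗[k] P) = (b * b') ⊗ₜ[k] (x • p)) :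
    ∃ φ : Module.End (B ⊗[k] A) (B ⊗[k] P) ≃ₐ[k] (Bᵐᵒᵖ ⊗[k] Module.End A P),
      ∀ (ψ : Module.End (B ⊗[k] A) (B ⊗[k] P)) (m : ℕ) (b : Fin m → B)
        (f : Fin m → Module.End A P),
        (φ ψ = ∑ j, MulOpposite.op (b j) ⊗ₜ[k] f j) ↔
          ∀ p : P, ψ ((1 : B) ⊗ₜ[k] p) = ∑ j, (b j) ⊗ₜ[k] (f j p) := by
  have : IsTensorAction k B A B P := ⟨hact⟩
  obtain ⟨φ, hφ⟩ := end_tensor_projective_general k A B B P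
  let e := Algebra.TensorProduct.congr (AlgEquiv.moduleEndSelf k (A := B))
    (AlgEquiv.refl (R := k) (A₁ := Module.End A P))
  refine ⟨φ.trans e.symm, fun ψ m b f => ?_⟩
  rw [AlgEquiv.trans_apply, AlgEquiv.symm_apply_eq, map_sum]
  refine (hφ ψ m (fun j => AlgEquiv.moduleEndSelf k (.op (b j))) f).trans
    ⟨fun h p => by simpa using h 1 p, fun h c p => ?_⟩
  rw [IsTensorAction.hom_tmul_eq_smul_one_tmul, h p]
  simp [Finset.smul_sum, hact]
end

section
/- Fix n ≥ 1 and a commutative ring R. For 1 ≤ m ≤ n−1 let U_m denote the n×n matrix over R equal to the identity matrix plus the matrix unit E_{m,m+1} (the matrix with a single 1 in position (m, m+1)). Then the ordered product (U_1·U_2·⋯·U_{n−1})·(U_1·U_2·⋯·U_{n−2})·⋯·(U_1·U_2)·(U_1) equals the upper-triangular matrix T with entries T_{ij} = binomial(n−i, j−i) for 1 ≤ i ≤ j ≤ n and T_{ij} = 0 for j < i. (For example, for n = 3 the product (U_1U_2)·U_1 equals the matrix with rows (1,2,1), (0,1,1), (0,0,1).) -/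
/-!
Row `i` of the matrix `T` of size `k + 1` lists the coefficients of `X ^ i * (X + 1) ^ (k - i)`, and
left multiplication by `1 + E_{p,p+1}` adds row `p + 1` to row `p` (rows counted from `0`). Hence
the product of these matrices over `p = 0, …, k` replaces the rows `k, …, 0`, in this order, each by
its sum with the already updated row below it, and Pascal's rule
`X ^ i * (X + 1) ^ (a + 1) = X ^ i * (X + 1) ^ a + X ^ (i + 1) * (X + 1) ^ a`
says that this raises `k` to `k + 1`, starting from the identity matrix at `k = 0`.
-/

open Polynomial

section ElementaryMatrix

variable {R : Type*} [Semiring R] {n : ℕ}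

variable (R n) in
/-- The matrix `1 + E_{p,p+1}`, with rows and columns counted from `0`. It is the identity when
`n ≤ p + 1`, where the matrix unit falls outside the square. -/
def elementaryMatrix (p : ℕ) : Matrix (Fin n) (Fin n) R :=
  1 + Matrix.of fun i j : Fin n => if (i : ℕ) = p ∧ (j : ℕ) = p + 1 then 1 else 0

theorem elementaryMatrix_eq_one_add_single {p : ℕ} (hp : p + 1 < n) :
    elementaryMatrix R n p = 1 + Matrix.single ⟨p, by lia⟩ ⟨p + 1, hp⟩ 1 := by
  ext i j
  simp only [elementaryMatrix, Matrix.add_apply, Matrix.of_apply, Matrix.single_apply,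
    Fin.ext_iff, eq_comm]

theorem elementaryMatrix_mul_of_rows {m : Type*} {p : ℕ} (hp : p + 1 < n) (f : ℕ → m → R) :
    elementaryMatrix R n p * Matrix.of (fun i : Fin n => f i) =
      Matrix.of fun i : Fin n => Function.update f p (f p + f (p + 1)) i := by
  ext i j
  rw [elementaryMatrix_eq_one_add_single hp, Matrix.add_mul, Matrix.one_mul, Matrix.add_apply]
  by_cases hi : i = ⟨p, by lia⟩
  · simp [hi]
  · have hip : (i : ℕ) ≠ p := fun h => hi (Fin.ext h)
    simp [hi, hip]

theorem prod_elementaryMatrix_mul_of_rows {m : Type*} {q : ℕ} (hq : q < n) {f g : ℕ → m → R}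
    (hlt : ∀ i < q, g i = f i + g (i + 1)) (hge : ∀ i, q ≤ i → g i = f i) :
    ((List.range q).map (elementaryMatrix R n)).prod * Matrix.of (fun i : Fin n => f i) =
      Matrix.of fun i : Fin n => g i := by
  induction q generalizing f with
  | zero => simp [hge]
  | succ q ih =>
    have hg : g q = f q + f (q + 1) := by rw [hlt q q.lt_succ_self, hge (q + 1) le_rfl]
    rw [List.range_succ, List.map_append, List.prod_append, List.map_singleton,
      List.prod_singleton, Matrix.mul_assoc, elementaryMatrix_mul_of_rows hq, ← hg]
    refine ih (by lia) (fun i hi => ?_) fun i hi => ?_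
    · rw [Function.update_of_ne hi.ne, hlt i (by lia)]
    · obtain rfl | hne := eq_or_ne i q
      · rw [Function.update_self]
      · rw [Function.update_of_ne hne, hge i (by lia)]

end ElementaryMatrix

section BinomialMatrix

variable (R : Type*) [Semiring R]

/-- The generating polynomial of row `i` of the binomial matrix of parameter `k`. The truncated
subtraction makes it `X ^ i`, a row of the identity matrix, for `k ≤ i`. -/
noncomputable def binomialPolynomial (k i : ℕ) : R[X] :=
  X ^ i * (X + 1) ^ (k - i)

theorem binomialPolynomial_of_le {k i : ℕ} (h : k ≤ i) : binomialPolynomial R k i = X ^ i := by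
  rw [binomialPolynomial, Nat.sub_eq_zero_of_le h, pow_zero, mul_one]

theorem binomialPolynomial_succ {k i : ℕ} (h : i ≤ k) :
    binomialPolynomial R (k + 1) i =
      binomialPolynomial R k i + binomialPolynomial R (k + 1) (i + 1) := by
  simp only [binomialPolynomial, Nat.add_sub_add_right, Nat.sub_add_comm h]
  rw [pow_succ' (X + 1), add_mul, one_mul, mul_add, ← mul_assoc, ← pow_succ, add_comm]

theorem coeff_binomialPolynomial (k i j : ℕ) :
    (binomialPolynomial R k i).coeff j = if i ≤ j then ((k - i).choose (j - i) : R) else 0 := by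
  rw [binomialPolynomial, coeff_X_pow_mul', coeff_X_add_one_pow]

/-- For `k < n`, the binomial multiplicity matrix `T` of size `k + 1`, extended to an `n × n` matrix
by the identity; its rows are given by their generating polynomials. -/
noncomputable def binomialMatrix (n k : ℕ) : Matrix (Fin n) (Fin n) R :=
  Matrix.of fun i j => (binomialPolynomial R k i).coeff j

theorem binomialMatrix_zero (n : ℕ) : binomialMatrix R n 0 = 1 := by
  ext i j
  rw [binomialMatrix, Matrix.of_apply, binomialPolynomial_of_le R i.val.zero_le, coeff_X_pow,
    Matrix.one_apply]
  simp only [Fin.ext_iff, eq_comm]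

theorem prod_elementaryMatrix_mul_binomialMatrix {n k : ℕ} (hk : k + 1 < n) :
    ((List.range (k + 1)).map (elementaryMatrix R n)).prod * binomialMatrix R n k =
      binomialMatrix R n (k + 1) := by
  refine prod_elementaryMatrix_mul_of_rows hk
    (f := fun i (j : Fin n) => (binomialPolynomial R k i).coeff j)
    (g := fun i (j : Fin n) => (binomialPolynomial R (k + 1) i).coeff j)
    (fun i hi => ?_) fun i hi => ?_
  · funext j
    rw [Pi.add_apply, binomialPolynomial_succ R (Nat.le_of_lt_succ hi), coeff_add]
  · rw [binomialPolynomial_of_le R hi, binomialPolynomial_of_le R (k.le_succ.trans hi)]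

theorem prod_prod_elementaryMatrix {n k : ℕ} (hk : k < n) :
    ((List.range k).reverse.map fun s =>
        ((List.range (s + 1)).map (elementaryMatrix R n)).prod).prod = binomialMatrix R n k := by
  induction k with
  | zero => simp [binomialMatrix_zero]
  | succ k ih =>
    rw [List.range_succ, List.reverse_append, List.reverse_singleton, List.singleton_append,
      List.map_cons, List.prod_cons, ih (by lia), prod_elementaryMatrix_mul_binomialMatrix R hk]

end BinomialMatrix

theorem elementary_product_eq_binomial_matrix_general (R : Type*) [Semiring R] {n k : ℕ}
    (hk : k < n) (U : ℕ → Matrix (Fin n) (Fin n) R)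
    (hU : ∀ p, U p = 1 + Matrix.of fun i j : Fin n =>
      if (i : ℕ) = p ∧ (j : ℕ) = p + 1 then 1 else 0) :
    (((List.range k).reverse.map fun s =>
        (((List.range (s + 1)).map fun p => U p).prod)).prod) =
      Matrix.of (fun i j : Fin n =>
        if i ≤ j then (((k - (i : ℕ)).choose ((j : ℕ) - (i : ℕ)) : ℕ) : R) else 0) := by
  obtain rfl : U = elementaryMatrix R n := funext hU
  rw [prod_prod_elementaryMatrix R hk]
  ext i j
  exact coeff_binomialPolynomial R k i j

/-- For `1 ≤ m ≤ n-1` let `U m` be the `n × n` identity matrix plus the matrix unit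
`E_{m,m+1}` (here written 0-indexed: `U' p = 1 + E_{p,p+1}` for `0 ≤ p ≤ n-2`, with
`U' p = U (p+1)`). Then the ordered product
`(U 1 ⋯ U (n-1)) * (U 1 ⋯ U (n-2)) * ⋯ * (U 1 * U 2) * (U 1)`
equals the upper-triangular matrix `T` with entries `T i j = (n - i).choose (j - i)`
for `i ≤ j` (1-indexed; here 0-indexed: `T i j = (n - 1 - i).choose (j - i)`),
and `T i j = 0` for `j < i`. -/
theorem elementary_product_eq_binomial_matrix (R : Type*) [CommRing R] (n : ℕ) (hn : 1 ≤ n)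
    (U : ℕ → Matrix (Fin n) (Fin n) R)
    (hU : ∀ p, U p = 1 + Matrix.of fun i j : Fin n =>
      if (i : ℕ) = p ∧ (j : ℕ) = p + 1 then 1 else 0) :
    (((List.range (n - 1)).reverse.map fun s =>
        (((List.range (s + 1)).map fun p => U p).prod)).prod) =
      Matrix.of (fun i j : Fin n =>
        if i ≤ j then (((n - 1 - (i : ℕ)).choose ((j : ℕ) - (i : ℕ)) : ℕ) : R) else 0) :=
  elementary_product_eq_binomial_matrix_general R (Nat.sub_one_lt_of_lt hn) U hU
end
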